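/- Let β > 0, let (x_k)_{k≥1} be nonnegative differentiable functions on [0,∞) with x_k(0) = 0, and let (r_k)_{k≥1}, (α_k)_{k≥1} be constants with r_k ≥ 0 and α_k > 0, such that for every k ≥ 1 and every t ≥ 0 one has x_k'(t) ≤ β·k·(α_k·x_{k+1}(t) − x_k(t)) + r_k. Then for all integers j ≥ 1, ℓ ≥ 1 and all 0 ≤ t₀ ≤ t: x_j(t) ≤ A^ℓ_j · I^ℓ_j(t−t₀) · sup_{s ∈ [t₀,t]} x_{j+ℓ}(s) + Σ_{k=1}^{ℓ} A^ℓ_j · I^k_{j+ℓ−k}(t₀) · I^{ℓ−k}_j(t−t₀) · sup_{s ∈ [0,t₀]} x_{j+ℓ}(s) + (1/β) · Σ_{k=0}^{ℓ-1} A^{k+1}_j · I^{k+1}_j(t) · r_{j+k} / (α_{j+k}·(j+k)), where A^k_j := Π_{i=j}^{j+k-1} α_i (with A^0_j := 1). -/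

import Mathlib

open MeasureTheory

/-- The nested integral `∫₀^t ∫₀^{s_ℓ} ⋯ ∫₀^{s_2} e^{-β(s_2+⋯+s_ℓ)} e^{a s_1} ds_1 ⋯ ds_ℓ`,
defined recursively in the number `ℓ` of integrations. -/
noncomputable def nestInt (β a : ℝ) : ℕ → ℝ → ℝ
  | 0, _ => 1
  | 1, t => ∫ s in (0:ℝ)..t, Real.exp (a * s)
  | (n + 2), t => ∫ s in (0:ℝ)..t, Real.exp (-β * s) * nestInt β a (n + 1) s

/-- The iterated exponential integral
`I^ℓ_j(t) = β^ℓ ((j+ℓ-1)!/(j-1)!) e^{-βjt} ∫₀^t ∫₀^{s_ℓ} ⋯ ∫₀^{s_2}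
e^{-β(s_2+⋯+s_ℓ)} e^{β(j+ℓ-1)s_1} ds_1 ⋯ ds_ℓ`, with `I^0_j(t) = 1`. -/
noncomputable def Iex (β : ℝ) (j ℓ : ℕ) (t : ℝ) : ℝ :=
  if ℓ = 0 then 1
  else β ^ ℓ * ((Nat.factorial (j + ℓ - 1) : ℝ) / (Nat.factorial (j - 1) : ℝ)) *
    Real.exp (-(β * j * t)) * nestInt β (β * ((j : ℝ) + (ℓ : ℝ) - 1)) ℓ t

/-!
Each `I^{ℓ+1}_j` solves `y' = β j (I^ℓ_{j+1} - y)` with `y(0) = 0`. So, for each `N`, the functions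
`A^{N-k}_k I^{N-k}_k`, `k ≤ N`, solve the homogeneous hierarchy driven by the constant value `1` at
level `N`. Nonnegative combinations of them over `N`, started at time `a`, are supersolutions that
dominate prescribed values at time `a`. Since `β k α_k ≥ 0`, comparison passes down the hierarchy
from level `k + 1` to level `k` by Grönwall's inequality. Applied on `[0, t₀]` it bounds the values
`x_k(t₀)`; applied on `[t₀, t]` with these bounds as initial values, it yields the estimate.
-/

section NestInt

variable (β a : ℝ) (n : ℕ)

lemma nestInt_succ (t : ℝ) :
    nestInt β a (n + 1) t =
      ∫ s in (0 : ℝ)..t, Real.exp ((if n = 0 then a else -β) * s) * nestInt β a n s := by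
  cases n <;> simp [nestInt]

lemma continuous_nestInt : Continuous (nestInt β a n) := by
  induction n with
  | zero => exact continuous_const
  | succ n ih =>
    rw [funext (nestInt_succ β a n)]
    exact intervalIntegral.continuous_primitive
      (fun u v => Continuous.intervalIntegrable (by fun_prop) u v) 0

lemma hasDerivAt_nestInt_succ (t : ℝ) :
    HasDerivAt (nestInt β a (n + 1))
      (Real.exp ((if n = 0 then a else -β) * t) * nestInt β a n t) t := by
  have hcont := continuous_nestInt β a n
  rw [funext (nestInt_succ β a n)]
  exact (Continuous.integral_hasStrictDerivAt (by fun_prop) 0 t).hasDerivAt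

variable {t : ℝ}

lemma nestInt_nonneg (ht : 0 ≤ t) : 0 ≤ nestInt β a n t := by
  induction n generalizing t with
  | zero => exact zero_le_one
  | succ n ih =>
    rw [nestInt_succ]
    exact intervalIntegral.integral_nonneg ht fun s hs => mul_nonneg (Real.exp_nonneg _) (ih hs.1)

end NestInt

section Iex

variable {β t : ℝ} {j : ℕ}

lemma Iex_zero : Iex β j 0 t = 1 := if_pos rfl

lemma Iex_succ (hj : 1 ≤ j) (ℓ : ℕ) (t : ℝ) :
    Iex β j (ℓ + 1) t = β ^ (ℓ + 1) * j.ascFactorial (ℓ + 1) * Real.exp (-(β * j * t)) *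
      nestInt β (β * (j + ℓ)) (ℓ + 1) t := by
  have hfac : ((j + (ℓ + 1) - 1).factorial : ℝ) / (j - 1).factorial = j.ascFactorial (ℓ + 1) := by
    rw [← Nat.factorial_mul_ascFactorial' j (ℓ + 1) hj, Nat.cast_mul]
    exact mul_div_cancel_left₀ _ (by positivity)
  have hexp : (j : ℝ) + (ℓ + 1 : ℕ) - 1 = j + ℓ := by push_cast; ring
  rw [Iex, if_neg ℓ.succ_ne_zero, hfac, hexp]

lemma Iex_succ_at_zero (j ℓ : ℕ) : Iex β j (ℓ + 1) 0 = 0 := by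
  simp [Iex, nestInt_succ]

lemma Iex_nonneg (hβ : 0 ≤ β) (j ℓ : ℕ) (ht : 0 ≤ t) : 0 ≤ Iex β j ℓ t := by
  have hnest := nestInt_nonneg β (β * (j + ℓ - 1)) ℓ ht
  unfold Iex
  split_ifs <;> positivity

/-- The level rises because the factor `e^{-βt}` of the outermost integrand turns `e^{-βjt}` into
`e^{-β(j+1)t}`; for `ℓ = 0` the two exponentials cancel instead. -/
lemma Iex_prefactor_mul_integrand (ℓ : ℕ) :
    β ^ (ℓ + 1) * j.ascFactorial (ℓ + 1) * Real.exp (-(β * j * t)) *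
      (Real.exp ((if ℓ = 0 then β * (j + ℓ) else -β) * t) * nestInt β (β * (j + ℓ)) ℓ t) =
    β * j * Iex β (j + 1) ℓ t := by
  have hfac : (j.ascFactorial (ℓ + 1) : ℝ) = j * (j + 1).ascFactorial ℓ := by
    rw [Nat.ascFactorial_succ, ← Nat.succ_ascFactorial, Nat.cast_mul]
  cases ℓ with
  | zero =>
    have hexp : Real.exp (-(β * j * t)) * Real.exp (β * j * t) = 1 := by
      rw [← Real.exp_add, neg_add_cancel, Real.exp_zero]
    simp only [hfac, Iex_zero, nestInt, if_pos, Nat.cast_zero, add_zero, zero_add, pow_one, mul_one,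
      Nat.ascFactorial_zero, Nat.cast_one]
    rw [mul_assoc (β * j), hexp, mul_one]
  | succ ℓ =>
    have hexp : Real.exp (-(β * (j + 1 : ℕ) * t)) =
        Real.exp (-(β * j * t)) * Real.exp (-β * t) := by
      rw [← Real.exp_add]
      push_cast
      ring_nf
    have hrate : β * (((j + 1 : ℕ) : ℝ) + ℓ) = β * (j + (ℓ + 1 : ℕ)) := by push_cast; ring
    rw [hfac, Iex_succ (Nat.le_add_left 1 j), if_neg ℓ.succ_ne_zero, hexp, hrate]
    ring

lemma hasDerivAt_Iex_succ (hj : 1 ≤ j) (ℓ : ℕ) (t : ℝ) :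
    HasDerivAt (Iex β j (ℓ + 1)) (β * j * (Iex β (j + 1) ℓ t - Iex β j (ℓ + 1) t)) t := by
  have hexp : HasDerivAt (fun s => Real.exp (-(β * j * s)))
      (Real.exp (-(β * j * t)) * -(β * j)) t := by
    simpa using ((hasDerivAt_id t).const_mul (β * j)).neg.exp
  rw [Iex_succ hj, funext (Iex_succ hj ℓ)]
  refine ((hexp.const_mul _).mul (hasDerivAt_nestInt_succ β _ ℓ t)).congr_deriv ?_
  rw [Iex_prefactor_mul_integrand]
  ring

end Iex

section Response

variable {β M : ℝ} {r α w : ℕ → ℝ} {j : ℕ}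

/-- The function `A^ℓ_j I^ℓ_j`: the response of level `j` of the homogeneous hierarchy, started
from `0`, to the constant value `1` at level `j + ℓ`. -/
noncomputable def unitResponse (β : ℝ) (α : ℕ → ℝ) (j ℓ : ℕ) (t : ℝ) : ℝ :=
  (∏ i ∈ Finset.range ℓ, α (j + i)) * Iex β j ℓ t

/-- The contribution to level `j` of initial values `w k` at the levels `j ≤ k < j + ℓ`. Holding the
value `w k` constant instead of letting it decay keeps this a supersolution when `0 ≤ w`. -/
noncomputable def initialResponse (β : ℝ) (α w : ℕ → ℝ) (j ℓ : ℕ) (t : ℝ) : ℝ :=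
  ∑ m ∈ Finset.range ℓ, unitResponse β α j m t * w (j + m)

/-- The contribution to level `j` of the source terms `r k` at the levels `j ≤ k < j + ℓ`, switched
on at time `0`. -/
noncomputable def sourceResponse (β : ℝ) (r α : ℕ → ℝ) (j ℓ : ℕ) (t : ℝ) : ℝ :=
  (1 / β) * ∑ m ∈ Finset.range ℓ,
    unitResponse β α j (m + 1) t * (r (j + m) / (α (j + m) * ((j : ℝ) + m)))

/-- The supersolution at level `j` for the value `M` at level `j + ℓ` and, up to the contribution of
the sources before time `a`, the initial values `w` at time `a`. -/
noncomputable def response (β : ℝ) (r α w : ℕ → ℝ) (M a : ℝ) (j ℓ : ℕ) (t : ℝ) : ℝ :=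
  unitResponse β α j ℓ (t - a) * M + initialResponse β α w j ℓ (t - a) + sourceResponse β r α j ℓ t

lemma unitResponse_zero (t : ℝ) : unitResponse β α j 0 t = 1 := by
  simp [unitResponse, Iex_zero]

lemma unitResponse_succ_at_zero (j ℓ : ℕ) : unitResponse β α j (ℓ + 1) 0 = 0 := by
  rw [unitResponse, Iex_succ_at_zero, mul_zero]

lemma unitResponse_nonneg {ℓ : ℕ} {t : ℝ} (hβ : 0 ≤ β) (hα : ∀ i < ℓ, 0 ≤ α (j + i)) (ht : 0 ≤ t) :
    0 ≤ unitResponse β α j ℓ t :=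
  mul_nonneg (Finset.prod_nonneg fun i hi => hα i (Finset.mem_range.mp hi)) (Iex_nonneg hβ j ℓ ht)

lemma hasDerivAt_unitResponse_succ (hj : 1 ≤ j) (ℓ : ℕ) (t : ℝ) :
    HasDerivAt (unitResponse β α j (ℓ + 1))
      (β * j * (α j * unitResponse β α (j + 1) ℓ t - unitResponse β α j (ℓ + 1) t)) t := by
  have hprod : ∏ i ∈ Finset.range (ℓ + 1), α (j + i) =
      α j * ∏ i ∈ Finset.range ℓ, α (j + 1 + i) := by
    simp only [Finset.prod_range_succ', mul_comm, add_zero, add_assoc, add_comm 1]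
  refine ((hasDerivAt_Iex_succ hj ℓ t).const_mul _).congr_deriv ?_
  simp only [unitResponse, hprod]
  ring

lemma hasDerivAt_sum_unitResponse_succ (hj : 1 ≤ j) (c : ℕ → ℝ) (n : ℕ) (t : ℝ) :
    HasDerivAt (fun s => ∑ m ∈ Finset.range n, unitResponse β α j (m + 1) s * c m)
      (β * j * (α j * ∑ m ∈ Finset.range n, unitResponse β α (j + 1) m t * c m
        - ∑ m ∈ Finset.range n, unitResponse β α j (m + 1) t * c m)) t := by
  refine (HasDerivAt.fun_sum fun m _ =>
    (hasDerivAt_unitResponse_succ hj m t).mul_const (c m)).congr_deriv ?_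
  simp only [Finset.mul_sum, ← Finset.sum_sub_distrib]
  exact Finset.sum_congr rfl fun m _ => by ring

lemma initialResponse_succ (ℓ : ℕ) (t : ℝ) :
    initialResponse β α w j (ℓ + 1) t =
      (∑ m ∈ Finset.range ℓ, unitResponse β α j (m + 1) t * w (j + 1 + m)) + w j := by
  simp only [initialResponse, Finset.sum_range_succ', unitResponse_zero, one_mul, add_zero,
    add_assoc, add_comm 1]

lemma hasDerivAt_initialResponse_succ (hj : 1 ≤ j) (ℓ : ℕ) (t : ℝ) :
    HasDerivAt (initialResponse β α w j (ℓ + 1))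
      (β * j * (α j * initialResponse β α w (j + 1) ℓ t - initialResponse β α w j (ℓ + 1) t
        + w j)) t := by
  rw [initialResponse_succ, funext (initialResponse_succ ℓ)]
  refine ((hasDerivAt_sum_unitResponse_succ hj _ ℓ t).add_const (w j)).congr_deriv ?_
  rw [initialResponse]
  ring

lemma hasDerivAt_sourceResponse_succ (hβ : β ≠ 0) (hj : 1 ≤ j) (hα : α j ≠ 0) (ℓ : ℕ) (t : ℝ) :
    HasDerivAt (sourceResponse β r α j (ℓ + 1))
      (β * j * (α j * sourceResponse β r α (j + 1) ℓ t - sourceResponse β r α j (ℓ + 1) t)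
        + r j) t := by
  have hshift : ∑ m ∈ Finset.range (ℓ + 1),
        unitResponse β α (j + 1) m t * (r (j + m) / (α (j + m) * ((j : ℝ) + m))) =
      β * sourceResponse β r α (j + 1) ℓ t + r j / (α j * j) := by
    rw [sourceResponse, ← mul_assoc, mul_one_div_cancel hβ, one_mul, Finset.sum_range_succ',
      unitResponse_zero]
    simp only [Nat.cast_add, Nat.cast_one, Nat.cast_zero, add_zero, one_mul, add_assoc, add_comm 1,
      add_comm (1 : ℝ)]
  refine ((hasDerivAt_sum_unitResponse_succ hj _ (ℓ + 1) t).const_mul (1 / β)).congr_deriv ?_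
  have hj₀ : (j : ℝ) ≠ 0 := by positivity
  rw [hshift]
  unfold sourceResponse
  field_simp
  ring

lemma hasDerivAt_response_succ (hβ : β ≠ 0) (hj : 1 ≤ j) (hα : α j ≠ 0) (a : ℝ) (ℓ : ℕ) (t : ℝ) :
    HasDerivAt (response β r α w M a j (ℓ + 1))
      (β * j * (α j * response β r α w M a (j + 1) ℓ t - response β r α w M a j (ℓ + 1) t + w j)
        + r j) t := by
  refine ((((hasDerivAt_unitResponse_succ hj ℓ (t - a)).comp_sub_const t a).mul_const M).add
    ((hasDerivAt_initialResponse_succ hj ℓ (t - a)).comp_sub_const t a)).add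
    (hasDerivAt_sourceResponse_succ hβ hj hα ℓ t) |>.congr_deriv ?_
  simp only [response]
  ring

lemma response_zero (a t : ℝ) : response β r α w M a j 0 t = M := by
  simp [response, unitResponse_zero, initialResponse, sourceResponse]

lemma response_succ_at_start (a : ℝ) (ℓ : ℕ) :
    response β r α w M a j (ℓ + 1) a = w j + sourceResponse β r α j (ℓ + 1) a := by
  simp [response, initialResponse_succ, unitResponse_succ_at_zero]

lemma sourceResponse_at_zero (j ℓ : ℕ) : sourceResponse β r α j ℓ 0 = 0 := by
  simp [sourceResponse, unitResponse_succ_at_zero]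

lemma response_zero_initial (a : ℝ) (ℓ : ℕ) (t : ℝ) :
    response β r α 0 M a j ℓ t = unitResponse β α j ℓ (t - a) * M + sourceResponse β r α j ℓ t := by
  simp [response, initialResponse]

lemma initialResponse_unitResponse (j ℓ : ℕ) (t₀ t : ℝ) :
    initialResponse β α (fun k => unitResponse β α k (j + ℓ - k) t₀ * M) j ℓ t =
      (∑ k ∈ Finset.Icc 1 ℓ, (∏ i ∈ Finset.range ℓ, α (j + i)) * Iex β (j + ℓ - k) k t₀ *
        Iex β j (ℓ - k) t) * M := by
  rw [initialResponse, Finset.sum_mul]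
  refine Finset.sum_nbij' (fun m => ℓ - m) (fun k => ℓ - k) ?_ ?_ ?_ ?_ fun m hm => ?_
  iterate 4 simp only [Finset.mem_range, Finset.mem_Icc]; omega
  obtain ⟨n, rfl⟩ := Nat.exists_eq_add_of_le (Finset.mem_range.mp hm).le
  simp only [unitResponse, Finset.prod_range_add, add_tsub_cancel_left,
    add_tsub_cancel_right, ← add_assoc]
  ring

end Response

section Comparison

variable {a b : ℝ} {j N : ℕ}

lemma nonpos_of_deriv_right_le_mul {f f' : ℝ → ℝ} {K : ℝ} (hf : ContinuousOn f (Set.Icc a b))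
    (hf' : ∀ s ∈ Set.Ico a b, HasDerivWithinAt f (f' s) (Set.Ici s) s) (ha : f a ≤ 0)
    (bound : ∀ s ∈ Set.Ico a b, f' s ≤ K * f s) :
    ∀ s ∈ Set.Icc a b, f s ≤ 0 := by
  intro s hs
  rw [← gronwallBound_ε0_δ0 K (s - a)]
  exact le_gronwallBound_of_liminf_deriv_right_le hf
    (fun s hs _ hr => (hf' s hs).liminf_right_slope_le hr) ha
    (fun s hs => (bound s hs).trans_eq (add_zero _).symm) s hs

lemma nonpos_of_cascade {v v' : ℕ → ℝ → ℝ} {c K : ℕ → ℝ} (hjN : j ≤ N)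
    (hc : ∀ k ∈ Set.Ico j N, 0 ≤ c k)
    (hv : ∀ k ∈ Set.Ico j N, ContinuousOn (v k) (Set.Icc a b))
    (hv' : ∀ k ∈ Set.Ico j N, ∀ s ∈ Set.Ico a b, HasDerivWithinAt (v k) (v' k s) (Set.Ici s) s)
    (bound : ∀ k ∈ Set.Ico j N, ∀ s ∈ Set.Ico a b, v' k s ≤ c k * v (k + 1) s + K k * v k s)
    (ha : ∀ k ∈ Set.Ico j N, v k a ≤ 0) (hN : ∀ s ∈ Set.Icc a b, v N s ≤ 0) :
    ∀ s ∈ Set.Icc a b, v j s ≤ 0 := by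
  refine Nat.decreasingInduction' (P := fun k => ∀ s ∈ Set.Icc a b, v k s ≤ 0)
    (fun k hkN hjk ih => ?_) hjN hN
  have hk : k ∈ Set.Ico j N := ⟨hjk, hkN⟩
  refine nonpos_of_deriv_right_le_mul (hv k hk) (hv' k hk) (ha k hk) fun s hs =>
    (bound k hk s hs).trans (add_le_of_nonpos_left ?_)
  exact mul_nonpos_of_nonneg_of_nonpos (hc k hk) (ih s (Set.Ico_subset_Icc_self hs))

/-- The differential inequality `x_k' ≤ β k (α_k x_{k+1} - x_k) + r_k` on `[a, b]`, for the levels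
`j ≤ k < N` only. As in Grönwall's inequality, right derivatives on `[a, b)` suffice. -/
structure IsSubsolution (β : ℝ) (r α : ℕ → ℝ) (x x' : ℕ → ℝ → ℝ) (j N : ℕ) (a b : ℝ) : Prop where
  continuousOn : ∀ k ∈ Set.Ico j N, ContinuousOn (x k) (Set.Icc a b)
  hasDerivWithinAt : ∀ k ∈ Set.Ico j N, ∀ s ∈ Set.Ico a b,
    HasDerivWithinAt (x k) (x' k s) (Set.Ici s) s
  deriv_le : ∀ k ∈ Set.Ico j N, ∀ s ∈ Set.Ico a b,
    x' k s ≤ β * k * (α k * x (k + 1) s - x k s) + r k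

namespace IsSubsolution

variable {β M M₀ t₀ t : ℝ} {r α w : ℕ → ℝ} {x x' : ℕ → ℝ → ℝ}

lemma mono {i : ℕ} {c d : ℝ} (h : IsSubsolution β r α x x' j N a b) (hji : j ≤ i) (hac : a ≤ c)
    (hdb : d ≤ b) : IsSubsolution β r α x x' i N c d where
  continuousOn k hk := (h.continuousOn k ⟨hji.trans hk.1, hk.2⟩).mono (Set.Icc_subset_Icc hac hdb)
  hasDerivWithinAt k hk s hs :=
    h.hasDerivWithinAt k ⟨hji.trans hk.1, hk.2⟩ s (Set.Ico_subset_Ico hac hdb hs)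
  deriv_le k hk s hs := h.deriv_le k ⟨hji.trans hk.1, hk.2⟩ s (Set.Ico_subset_Ico hac hdb hs)

theorem le_response (h : IsSubsolution β r α x x' j N a b) (hβ : 0 < β) (hj : 1 ≤ j) (hjN : j ≤ N)
    (hα : ∀ k ∈ Set.Ico j N, 0 < α k) (hw : ∀ k ∈ Set.Ico j N, 0 ≤ w k)
    (ha : ∀ k ∈ Set.Ico j N, x k a ≤ w k + sourceResponse β r α k (N - k) a)
    (hM : ∀ s ∈ Set.Icc a b, x N s ≤ M) :
    ∀ s ∈ Set.Icc a b, x j s ≤ response β r α w M a j (N - j) s := by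
  set y : ℕ → ℝ → ℝ := fun k => response β r α w M a k (N - k) with hy
  have hsucc : ∀ k ∈ Set.Ico j N, N - k = N - (k + 1) + 1 := fun k hk => by grind
  have hderiv : ∀ k ∈ Set.Ico j N, ∀ s,
      HasDerivAt (y k) (β * k * (α k * y (k + 1) s - y k s + w k) + r k) s := fun k hk s => by
    simpa only [hy, hsucc k hk] using
      hasDerivAt_response_succ hβ.ne' (hj.trans hk.1) (hα k hk).ne' a (N - (k + 1)) s
  have hsub := nonpos_of_cascade (v := fun k s => x k s - y k s) (c := fun k => β * k * α k)
    (K := fun k => -(β * k)) hjN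
    (fun k hk => by have := hα k hk; positivity)
    (fun k hk => (h.continuousOn k hk).sub fun s _ =>
      (hderiv k hk s).continuousAt.continuousWithinAt)
    (fun k hk s hs => (h.hasDerivWithinAt k hk s hs).sub (hderiv k hk s).hasDerivWithinAt)
    (fun k hk s hs => by
      have hdecay : 0 ≤ β * k * w k := mul_nonneg (by positivity) (hw k hk)
      linarith [h.deriv_le k hk s hs])
    (fun k hk => by
      have hstart : y k a = w k + sourceResponse β r α k (N - k) a := by
        simp only [hy, hsucc k hk, response_succ_at_start]
      linarith [ha k hk])
    (fun s hs => by simpa [hy, response_zero] using hM s hs)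
  exact fun s hs => sub_nonpos.mp (hsub s hs)

theorem le_response_intermediate (h : IsSubsolution β r α x x' j N 0 t) (hβ : 0 < β)
    (hj : 1 ≤ j) (hjN : j ≤ N) (hα : ∀ k ∈ Set.Ico j N, 0 < α k) (ht₀ : 0 ≤ t₀) (ht : t₀ ≤ t)
    (hx0 : ∀ k ∈ Set.Ico j N, x k 0 ≤ 0) (hM₀ : 0 ≤ M₀)
    (hxM₀ : ∀ s ∈ Set.Icc 0 t₀, x N s ≤ M₀) (hxM : ∀ s ∈ Set.Icc t₀ t, x N s ≤ M) :
    x j t ≤ response β r α (fun k => unitResponse β α k (N - k) t₀ * M₀) M t₀ j (N - j) t := by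
  have hα_above : ∀ k ∈ Set.Ico j N, ∀ i ∈ Set.Ico k N, 0 < α i := fun k hk i hi =>
    hα i ⟨hk.1.trans hi.1, hi.2⟩
  refine (h.mono le_rfl ht₀ le_rfl).le_response hβ hj hjN hα (fun k hk => ?_) (fun k hk => ?_) hxM t
    ⟨ht, le_rfl⟩
  · exact mul_nonneg
      (unitResponse_nonneg hβ.le (fun i hi => (hα_above k hk _ (by grind)).le) ht₀) hM₀
  · have hstage := (h.mono hk.1 le_rfl ht).le_response (w := 0) hβ (hj.trans hk.1) hk.2.le
      (hα_above k hk) (fun _ _ => le_rfl)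
      (fun i hi => by simpa [sourceResponse_at_zero] using hx0 i ⟨hk.1.trans hi.1, hi.2⟩)
      hxM₀ t₀ ⟨ht₀, le_rfl⟩
    rwa [response_zero_initial, sub_zero] at hstage

end IsSubsolution

end Comparison

theorem ode_hierarchy_bound_t0_general (β : ℝ) (hβ : 0 < β) (x x' : ℕ → ℝ → ℝ) (r α : ℕ → ℝ)
    (hx0 : ∀ k, 1 ≤ k → x k 0 = 0)
    (hα : ∀ k, 1 ≤ k → 0 < α k)
    (hderiv : ∀ k, 1 ≤ k → ∀ t : ℝ, 0 ≤ t → HasDerivWithinAt (x k) (x' k t) (Set.Ici 0) t)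
    (hineq : ∀ k, 1 ≤ k → ∀ t : ℝ, 0 ≤ t →
      x' k t ≤ β * k * (α k * x (k + 1) t - x k t) + r k)
    (j ℓ : ℕ) (hj : 1 ≤ j) (t₀ t : ℝ) (ht₀ : 0 ≤ t₀) (ht : t₀ ≤ t) :
    x j t ≤ (∏ i ∈ Finset.range ℓ, α (j + i)) * Iex β j ℓ (t - t₀) *
        sSup (x (j + ℓ) '' Set.Icc t₀ t)
      + (∑ k ∈ Finset.Icc 1 ℓ,
          (∏ i ∈ Finset.range ℓ, α (j + i)) * Iex β (j + ℓ - k) k t₀ *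
            Iex β j (ℓ - k) (t - t₀)) * sSup (x (j + ℓ) '' Set.Icc 0 t₀)
      + (1 / β) * ∑ k ∈ Finset.range ℓ,
          (∏ i ∈ Finset.range (k + 1), α (j + i)) * Iex β j (k + 1) t *
            (r (j + k) / (α (j + k) * ((j : ℝ) + k))) := by
  have hcont (k : ℕ) (hk : 1 ≤ k) : ContinuousOn (x k) (Set.Ici 0) := fun s hs =>
    (hderiv k hk s hs).continuousWithinAt
  have hN : 1 ≤ j + ℓ := hj.trans (Nat.le_add_right j ℓ)
  have hsup (a b : ℝ) (ha : 0 ≤ a) :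
      ∀ s ∈ Set.Icc a b, x (j + ℓ) s ≤ sSup (x (j + ℓ) '' Set.Icc a b) := fun s hs =>
    le_csSup (isCompact_Icc.bddAbove_image ((hcont _ hN).mono fun u hu => ha.trans hu.1))
      (Set.mem_image_of_mem _ hs)
  have hsub : IsSubsolution β r α x x' j (j + ℓ) 0 t :=
    { continuousOn := fun k hk => (hcont k (hj.trans hk.1)).mono Set.Icc_subset_Ici_self
      hasDerivWithinAt := fun k hk s hs =>
        (hderiv k (hj.trans hk.1) s hs.1).mono (Set.Ici_subset_Ici.mpr hs.1)
      deriv_le := fun k hk s hs => hineq k (hj.trans hk.1) s hs.1 }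
  have hbound := hsub.le_response_intermediate hβ hj (Nat.le_add_right j ℓ)
    (fun k hk => hα k (hj.trans hk.1)) ht₀ ht (fun k hk => (hx0 k (hj.trans hk.1)).le)
    ((hx0 _ hN).symm.trans_le (hsup 0 t₀ le_rfl 0 ⟨le_rfl, ht₀⟩)) (hsup 0 t₀ le_rfl) (hsup t₀ t ht₀)
  rwa [Nat.add_sub_cancel_left, response, initialResponse_unitResponse] at hbound

/-- Gronwall-type estimate for the ODE hierarchy with an intermediate time `t₀`:
`x_j(t) ≤ A^ℓ_j I^ℓ_j(t−t₀) sup_{[t₀,t]} x_{j+ℓ}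
  + Σ_{k=1}^{ℓ} A^ℓ_j I^k_{j+ℓ−k}(t₀) I^{ℓ−k}_j(t−t₀) sup_{[0,t₀]} x_{j+ℓ}
  + (1/β) Σ_{k=0}^{ℓ-1} A^{k+1}_j I^{k+1}_j(t) r_{j+k}/(α_{j+k}(j+k))`. -/
theorem ode_hierarchy_bound_t0 (β : ℝ) (hβ : 0 < β) (x x' : ℕ → ℝ → ℝ) (r α : ℕ → ℝ)
    (hx0 : ∀ k, 1 ≤ k → x k 0 = 0)
    (hxnonneg : ∀ k, 1 ≤ k → ∀ t : ℝ, 0 ≤ t → 0 ≤ x k t)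
    (hr : ∀ k, 1 ≤ k → 0 ≤ r k)
    (hα : ∀ k, 1 ≤ k → 0 < α k)
    (hderiv : ∀ k, 1 ≤ k → ∀ t : ℝ, 0 ≤ t → HasDerivWithinAt (x k) (x' k t) (Set.Ici 0) t)
    (hineq : ∀ k, 1 ≤ k → ∀ t : ℝ, 0 ≤ t →
      x' k t ≤ β * k * (α k * x (k + 1) t - x k t) + r k)
    (j ℓ : ℕ) (hj : 1 ≤ j) (hℓ : 1 ≤ ℓ) (t₀ t : ℝ) (ht₀ : 0 ≤ t₀) (ht : t₀ ≤ t) :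
    x j t ≤ (∏ i ∈ Finset.range ℓ, α (j + i)) * Iex β j ℓ (t - t₀) *
        sSup (x (j + ℓ) '' Set.Icc t₀ t)
      + (∑ k ∈ Finset.Icc 1 ℓ,
          (∏ i ∈ Finset.range ℓ, α (j + i)) * Iex β (j + ℓ - k) k t₀ *
            Iex β j (ℓ - k) (t - t₀)) * sSup (x (j + ℓ) '' Set.Icc 0 t₀)
      + (1 / β) * ∑ k ∈ Finset.range ℓ,
          (∏ i ∈ Finset.range (k + 1), α (j + i)) * Iex β j (k + 1) t *
            (r (j + k) / (α (j + k) * ((j : ℝ) + k))) := by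
  exact ode_hierarchy_bound_t0_general β hβ x x' r α hx0 hα hderiv hineq j ℓ hj t₀ t ht₀ ht
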